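/- Let N ⊆ A = K[x_1,…,x_n] be a squarefree monomial ideal with minimal monomial generating set {x^{a_1},…,x^{a_s}} (so each a_i ∈ {0,1}^n). Then every a_i is an extreme point of conv(N); hence the exponent vectors of the minimal generators of N coincide with ext(N), i.e. every squarefree monomial ideal is an extremal ideal. -/

import Mathlib

open MvPolynomial Pointwise

attribute [local instance] Classical.propDecidable

noncomputable section

/-- The real exponent vector of a monomial exponent `a : Fin n →₀ ℕ`. -/
def expVec {n : ℕ} (a : Fin n →₀ ℕ) : Fin n → ℝ := fun i => (a i : ℝ)

/-- The standard inner product on `ℝ^n`. -/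
def dotR {n : ℕ} (u v : Fin n → ℝ) : ℝ := ∑ i, u i * v i

/-- A monomial ideal: an ideal generated by a set of monomials. -/
def IsMonomialIdeal {K : Type*} [Field K] {n : ℕ} (I : Ideal (MvPolynomial (Fin n) K)) : Prop :=
  ∃ S : Set (Fin n →₀ ℕ), I = Ideal.span ((fun a => (monomial a (1 : K))) '' S)

/-- The Newton polyhedron of an ideal: the convex hull of the exponent vectors of the
monomials belonging to the ideal. -/
def newtonPolyhedron {K : Type*} [Field K] {n : ℕ} (I : Ideal (MvPolynomial (Fin n) K)) :
    Set (Fin n → ℝ) :=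
  convexHull ℝ {v | ∃ a : Fin n →₀ ℕ, monomial a (1 : K) ∈ I ∧ v = expVec a}

/-- The hyperplane `{v : ⟨u,v⟩ = c}` is a supporting hyperplane of `C`:
`C ⊆ {v : ⟨u,v⟩ ≥ c}` and the hyperplane meets `C`. -/
def IsSupp {n : ℕ} (C : Set (Fin n → ℝ)) (u : Fin n → ℝ) (c : ℝ) : Prop :=
  (∀ v ∈ C, c ≤ dotR u v) ∧ ∃ v ∈ C, dotR u v = c

/-- `F` is a proper face of `C`: `F = S ∩ C` for some supporting hyperplane `S`, `F ≠ C`. -/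
def IsProperFace {n : ℕ} (C F : Set (Fin n → ℝ)) : Prop :=
  ∃ u c, u ≠ 0 ∧ IsSupp C u c ∧ F = {v ∈ C | dotR u v = c} ∧ F ≠ C

/-- A compact face is a proper face that is compact. -/
def IsCompactFace {n : ℕ} (C F : Set (Fin n → ℝ)) : Prop :=
  IsProperFace C F ∧ IsCompact F

/-- A maximal compact face: a compact face maximal under inclusion. -/
def IsMaxCompactFace {n : ℕ} (C F : Set (Fin n → ℝ)) : Prop :=
  IsCompactFace C F ∧ ∀ G, IsCompactFace C G → F ⊆ G → F = G

/-- The graded maximal ideal `(x_1, …, x_n)` of `K[x_1, …, x_n]`. -/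
def maxIdeal (K : Type*) [Field K] (n : ℕ) : Ideal (MvPolynomial (Fin n) K) :=
  Ideal.span (Set.range fun i => (X i : MvPolynomial (Fin n) K))

/-- `f` is a minimal generator of the monomial ideal `L` if `f ∈ L` and `f ∉ (x_1,…,x_n)·L`. -/
def IsMinGen {K : Type*} [Field K] {n : ℕ} (L : Ideal (MvPolynomial (Fin n) K))
    (f : MvPolynomial (Fin n) K) : Prop :=
  f ∈ L ∧ f ∉ maxIdeal K n * L

/-- `L` is a reduction ideal of `I`: `L ⊆ I` and `L·I^{m-1} = I^m` for some `m ≥ 1`. -/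
def IsReduction {K : Type*} [Field K] {n : ℕ} (L I : Ideal (MvPolynomial (Fin n) K)) : Prop :=
  L ≤ I ∧ ∃ m : ℕ, 1 ≤ m ∧ L * I ^ (m - 1) = I ^ m

/-!
Fix `a ≥ 0` in `ℝ^n` and let `C` be the set of all `v ≥ 0` such that `a ≤ v` as soon as `v` vanishes
wherever `a` does. On the orthant, if a point inside a segment vanishes in some coordinate, then so
do both endpoints; hence `C` is convex and `a` is an extreme point of it. If `x^a` is a minimal
generator of a squarefree ideal `N` and `x^b ∈ N` has support inside that of `a`, then `x^b` is a
multiple of a generator with that property, which divides `x^a` because for squarefree monomials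
divisibility is inclusion of supports; by minimality this generator is `x^a`, so `a ≤ b`. Thus
`conv(N) ⊆ C`, and `a` stays extreme in `conv(N)`. Conversely, if `x^b ∈ N` properly divides `x^a`,
then `a` is the midpoint of `b` and `a + (a - b)`, hence not extreme.
-/

section Convexity

variable {𝕜 ι : Type*} [Field 𝕜] [LinearOrder 𝕜] [IsStrictOrderedRing 𝕜]

lemma eq_left_of_mem_openSegment_of_le {E : Type*} [AddCommGroup E] [PartialOrder E]
    [IsOrderedAddMonoid E] [Module 𝕜 E] [PosSMulMono 𝕜 E] {a x y : E}
    (ha : a ∈ openSegment 𝕜 x y) (hx : a ≤ x) (hy : a ≤ y) : x = a := by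
  obtain ⟨p, q, hp, hq, hpq, hxy⟩ := ha
  have hle : p • x + q • y ≤ p • a + q • y := calc
    p • x + q • y = p • a + q • a := by rw [hxy, ← add_smul, hpq, one_smul]
    _ ≤ p • a + q • y := by gcongr
  exact (le_of_smul_le_smul_of_pos_left (le_of_add_le_add_right hle) hp).antisymm hx

lemma support_eq_union_of_mem_openSegment {x y z : ι → 𝕜} (hx : 0 ≤ x) (hy : 0 ≤ y)
    (hz : z ∈ openSegment 𝕜 x y) :
    Function.support z = Function.support x ∪ Function.support y := by
  obtain ⟨p, q, hp, hq, -, rfl⟩ := hz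
  ext i
  have hzero : p * x i + q * y i = 0 ↔ x i = 0 ∧ y i = 0 := by
    rw [add_eq_zero_iff_of_nonneg (mul_nonneg hp.le (hx i)) (mul_nonneg hq.le (hy i)),
      mul_eq_zero_iff_left hp.ne', mul_eq_zero_iff_left hq.ne']
  simpa [or_iff_not_imp_left] using hzero.not

/-- The nonnegative vectors that dominate `a` as soon as their support lies in that of `a`: a convex
set with extreme point `a`, used to bound the Newton polyhedron from outside. -/
def supportwiseIci (a : ι → 𝕜) : Set (ι → 𝕜) :=
  {v | 0 ≤ v ∧ (Function.support v ⊆ Function.support a → a ≤ v)}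

lemma convex_supportwiseIci (a : ι → 𝕜) : Convex 𝕜 (supportwiseIci a) := by
  rw [convex_iff_openSegment_subset]
  rintro x ⟨hx, hax⟩ y ⟨hy, hay⟩ z hz
  refine ⟨(convex_Ici 0).openSegment_subset hx hy hz, fun hza => ?_⟩
  rw [support_eq_union_of_mem_openSegment hx hy hz] at hza
  obtain ⟨hxa, hya⟩ := Set.union_subset_iff.1 hza
  exact (convex_Ici a).openSegment_subset (hax hxa) (hay hya) hz

lemma mem_extremePoints_supportwiseIci {a : ι → 𝕜} (ha : 0 ≤ a) :
    a ∈ (supportwiseIci a).extremePoints 𝕜 := by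
  rw [mem_extremePoints_iff_left]
  refine ⟨⟨ha, fun _ => le_rfl⟩, ?_⟩
  rintro x ⟨hx, hax⟩ y ⟨hy, hay⟩ h
  have hsupp := support_eq_union_of_mem_openSegment hx hy h
  exact eq_left_of_mem_openSegment_of_le h (hax (hsupp ▸ Set.subset_union_left))
    (hay (hsupp ▸ Set.subset_union_right))

lemma mem_extremePoints_convexHull_of_subset_supportwiseIci {a : ι → 𝕜} {T : Set (ι → 𝕜)}
    (haT : a ∈ T) (hT : T ⊆ supportwiseIci a) : a ∈ (convexHull 𝕜 T).extremePoints 𝕜 :=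
  inter_extremePoints_subset_extremePoints_of_subset
    (convexHull_min hT (convex_supportwiseIci a))
    ⟨subset_convexHull 𝕜 T haT, mem_extremePoints_supportwiseIci (hT haT).1⟩

end Convexity

section ExpVec

variable {n : ℕ}

lemma expVec_nonneg (a : Fin n →₀ ℕ) : 0 ≤ expVec a := fun _ => Nat.cast_nonneg _

lemma expVec_mono : Monotone (expVec (n := n)) := fun _ _ h i => Nat.cast_le.2 (h i)

lemma expVec_injective : Function.Injective (expVec (n := n)) :=
  fun _ _ h => Finsupp.ext fun i => Nat.cast_injective (congrFun h i)

lemma expVec_add (a b : Fin n →₀ ℕ) : expVec (a + b) = expVec a + expVec b :=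
  funext fun _ => Nat.cast_add _ _

lemma support_expVec (a : Fin n →₀ ℕ) : Function.support (expVec a) = a.support := by
  ext i
  simp [expVec]

lemma expVec_mem_extremePoints_convexHull {U : Set (Fin n →₀ ℕ)} {a : Fin n →₀ ℕ} (ha : a ∈ U)
    (hU : ∀ b ∈ U, b.support ⊆ a.support → a ≤ b) :
    expVec a ∈ (convexHull ℝ (expVec '' U)).extremePoints ℝ := by
  refine mem_extremePoints_convexHull_of_subset_supportwiseIci (Set.mem_image_of_mem _ ha) ?_
  rintro _ ⟨b, hb, rfl⟩
  refine ⟨expVec_nonneg b, fun h => expVec_mono (hU b hb ?_)⟩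
  rwa [support_expVec, support_expVec, Finset.coe_subset] at h

lemma extremePoints_convexHull_expVec_image_subset {U : Set (Fin n →₀ ℕ)} (hU : IsUpperSet U) :
    (convexHull ℝ (expVec '' U)).extremePoints ℝ ⊆ expVec '' {a | Minimal (· ∈ U) a} := by
  intro v hv
  obtain ⟨a, ha, rfl⟩ := extremePoints_convexHull_subset hv
  refine ⟨a, ⟨ha, fun b hb hba => ?_⟩, rfl⟩
  obtain ⟨c, rfl⟩ := exists_add_of_le hba
  have hmem : ∀ d ∈ U, expVec d ∈ convexHull ℝ (expVec '' U) :=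
    fun d hd => subset_convexHull ℝ _ (Set.mem_image_of_mem _ hd)
  have hmid : expVec (b + c) ∈ openSegment ℝ (expVec b) (expVec (b + c + c)) := by
    refine ⟨1 / 2, 1 / 2, by norm_num, by norm_num, by norm_num, ?_⟩
    simp only [expVec_add]
    module
  have hb_eq := (mem_extremePoints_iff_left.1 hv).2 _ (hmem b hb) _
    (hmem _ (hU le_self_add ha)) hmid
  exact (expVec_injective hb_eq).ge

end ExpVec

section Exponents

variable {σ R : Type*} [CommSemiring R]

lemma finsupp_lt_iff_exists_single_one_add_le {a b : σ →₀ ℕ} :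
    a < b ↔ ∃ i, Finsupp.single i 1 + a ≤ b := by
  constructor
  · intro h
    obtain ⟨hle, i, hi⟩ := Pi.lt_def.1 (Finsupp.coe_lt_coe.2 h)
    refine ⟨i, fun j => ?_⟩
    rcases eq_or_ne i j with rfl | hij
    · simpa [Nat.one_add_le_iff] using hi
    · simpa [hij] using hle j
  · rintro ⟨i, h⟩
    exact (lt_add_of_pos_left a (by simp [pos_iff_ne_zero])).trans_le h

lemma le_of_support_subset_of_le_one {s t : σ →₀ ℕ} (hs : ∀ i, s i ≤ 1)
    (h : s.support ⊆ t.support) : s ≤ t := by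
  intro i
  by_cases hi : s i = 0
  · simp [hi]
  · exact (hs i).trans (Nat.one_le_iff_ne_zero.2
      (Finsupp.mem_support_iff.1 (h (Finsupp.mem_support_iff.2 hi))))

/-- The set `Γ(I)` of exponents of the monomials belonging to `I`. -/
def exponentSet (I : Ideal (MvPolynomial σ R)) : Set (σ →₀ ℕ) := {a | monomial a (1 : R) ∈ I}

lemma isUpperSet_exponentSet (I : Ideal (MvPolynomial σ R)) : IsUpperSet (exponentSet I) :=
  fun _ _ hab => I.mem_of_dvd (monomial_dvd_monomial.2 ⟨Or.inr hab, dvd_rfl⟩)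

lemma exponentSet_span_monomial [Nontrivial R] (S : Set (σ →₀ ℕ)) :
    exponentSet (Ideal.span ((fun a => monomial a (1 : R)) '' S)) = upperClosure S := by
  ext a
  simp [exponentSet, mem_ideal_span_monomial_image, support_monomial]

lemma span_monomial_mul_span_monomial (S T : Set (σ →₀ ℕ)) :
    Ideal.span ((fun a => monomial a (1 : R)) '' S) *
        Ideal.span ((fun a => monomial a (1 : R)) '' T) =
      Ideal.span ((fun a => monomial a (1 : R)) '' (S + T)) := by
  rw [Ideal.span_mul_span', ← Set.image2_add, ← Set.image2_mul]
  congr 1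
  exact (Set.image_image2_distrib fun a b => by simp [monomial_mul]).symm

end Exponents

section MonomialIdeal

variable {K : Type*} [Field K] {n : ℕ}

lemma newtonPolyhedron_eq_convexHull_image (I : Ideal (MvPolynomial (Fin n) K)) :
    newtonPolyhedron I = convexHull ℝ (expVec '' exponentSet I) := by
  simp only [newtonPolyhedron, exponentSet, Set.image, Set.mem_ofPred_eq, eq_comm]

lemma maxIdeal_eq_span_monomial :
    maxIdeal K n = Ideal.span ((fun a => monomial a (1 : K)) ''
      Set.range fun i => Finsupp.single i 1) := by
  rw [← Set.range_comp]
  rfl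

lemma mem_exponentSet_maxIdeal_mul_iff {I : Ideal (MvPolynomial (Fin n) K)}
    (hI : IsMonomialIdeal I) {a : Fin n →₀ ℕ} :
    a ∈ exponentSet (maxIdeal K n * I) ↔ ∃ b ∈ exponentSet I, b < a := by
  obtain ⟨S, rfl⟩ := hI
  rw [maxIdeal_eq_span_monomial, span_monomial_mul_span_monomial, exponentSet_span_monomial,
    exponentSet_span_monomial]
  simp only [SetLike.mem_coe, mem_upperClosure, Set.mem_add, Set.mem_range]
  constructor
  · rintro ⟨_, ⟨_, ⟨i, rfl⟩, s, hs, rfl⟩, h⟩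
    exact ⟨s, ⟨s, hs, le_rfl⟩, finsupp_lt_iff_exists_single_one_add_le.2 ⟨i, h⟩⟩
  · rintro ⟨b, ⟨s, hs, hsb⟩, hba⟩
    obtain ⟨i, h⟩ := finsupp_lt_iff_exists_single_one_add_le.1 (hsb.trans_lt hba)
    exact ⟨_, ⟨_, ⟨i, rfl⟩, s, hs, rfl⟩, h⟩

lemma isMinGen_monomial_iff_minimal {I : Ideal (MvPolynomial (Fin n) K)}
    (hI : IsMonomialIdeal I) {a : Fin n →₀ ℕ} :
    IsMinGen I (monomial a (1 : K)) ↔ Minimal (· ∈ exponentSet I) a := by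
  change a ∈ exponentSet I ∧ a ∉ exponentSet (maxIdeal K n * I) ↔ _
  rw [mem_exponentSet_maxIdeal_mul_iff hI, minimal_iff_forall_lt]
  grind

lemma expVec_mem_extremePoints_newtonPolyhedron {S : Set (Fin n →₀ ℕ)}
    (hS : ∀ s ∈ S, ∀ t ∈ S, s.support ⊆ t.support → s ≤ t) {a : Fin n →₀ ℕ}
    (ha : IsMinGen (Ideal.span ((fun a => monomial a (1 : K)) '' S)) (monomial a (1 : K))) :
    expVec a ∈ (newtonPolyhedron (Ideal.span ((fun a => monomial a (1 : K)) '' S))).extremePoints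
      ℝ := by
  rw [isMinGen_monomial_iff_minimal ⟨S, rfl⟩, exponentSet_span_monomial] at ha
  rw [newtonPolyhedron_eq_convexHull_image, exponentSet_span_monomial]
  have haS : a ∈ S := by
    obtain ⟨s, hs, hsa⟩ := ha.prop
    rwa [← ha.eq_of_le (subset_upperClosure hs) hsa]
  refine expVec_mem_extremePoints_convexHull ha.prop ?_
  rintro b ⟨s, hs, hsb⟩ hba
  have hsa : s ≤ a := hS s hs a haS ((Finsupp.support_mono hsb).trans hba)
  exact (ha.le_of_le (subset_upperClosure hs) hsa).trans hsb

lemma extremePoints_newtonPolyhedron_subset {I : Ideal (MvPolynomial (Fin n) K)}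
    (hI : IsMonomialIdeal I) :
    (newtonPolyhedron I).extremePoints ℝ ⊆
      {v | ∃ a : Fin n →₀ ℕ, IsMinGen I (monomial a (1 : K)) ∧ v = expVec a} := by
  rw [newtonPolyhedron_eq_convexHull_image]
  intro v hv
  obtain ⟨a, ha, rfl⟩ :=
    extremePoints_convexHull_expVec_image_subset (isUpperSet_exponentSet I) hv
  exact ⟨a, (isMinGen_monomial_iff_minimal hI).2 ha, rfl⟩

end MonomialIdeal

theorem stmt5_general {K : Type*} [Field K] {n : ℕ} (N : Ideal (MvPolynomial (Fin n) K))
    (hN : ∃ S : Set (Fin n →₀ ℕ), (∀ s ∈ S, ∀ t ∈ S, s.support ⊆ t.support → s ≤ t) ∧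
        N = Ideal.span ((fun a => monomial a (1 : K)) '' S)) :
    (∀ a : Fin n →₀ ℕ, IsMinGen N (monomial a (1 : K)) →
        expVec a ∈ Set.extremePoints ℝ (newtonPolyhedron N)) ∧
    {v | ∃ a : Fin n →₀ ℕ, IsMinGen N (monomial a (1 : K)) ∧ v = expVec a}
      = Set.extremePoints ℝ (newtonPolyhedron N) := by
  obtain ⟨S, hS, rfl⟩ := hN
  have hext := fun a => expVec_mem_extremePoints_newtonPolyhedron (K := K) hS (a := a)
  refine ⟨hext, Set.Subset.antisymm ?_ (extremePoints_newtonPolyhedron_subset ⟨S, rfl⟩)⟩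
  rintro _ ⟨a, ha, rfl⟩
  exact hext a ha

theorem stmt5 {K : Type*} [Field K] {n : ℕ} (N : Ideal (MvPolynomial (Fin n) K))
    (hsqfree : ∃ S : Set (Fin n →₀ ℕ), (∀ a ∈ S, ∀ i, a i ≤ 1) ∧
        N = Ideal.span ((fun a => monomial a (1 : K)) '' S)) :
    (∀ a : Fin n →₀ ℕ, IsMinGen N (monomial a (1 : K)) →
        expVec a ∈ Set.extremePoints ℝ (newtonPolyhedron N)) ∧
    {v | ∃ a : Fin n →₀ ℕ, IsMinGen N (monomial a (1 : K)) ∧ v = expVec a}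
      = Set.extremePoints ℝ (newtonPolyhedron N) := by
  obtain ⟨S, hS, rfl⟩ := hsqfree
  exact stmt5_general _ ⟨S, fun s hs _ _ => le_of_support_subset_of_le_one (hS s hs), rfl⟩
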